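/- Let A be a d×d rational matrix. The following are equivalent: (a) the characteristic polynomial of A has integer coefficients; (b) the minimal polynomial of A has integer coefficients; (c) every complex root of the characteristic polynomial of A is integral over ℤ (an algebraic integer); (d) there exists an integer m ≥ 1 such that for every n ∈ ℕ, every entry of m·A^n is an integer; (e) there exist a d×d integer matrix B and a d×d integer matrix P that is invertible as a rational matrix such that A = P B P⁻¹ over ℚ; (f) for every k ∈ ℕ, the trace of A^k is an integer. -/

import Mathlib

open Polynomial

lemma aux_det {d : ℕ} (A : Matrix (Fin d) (Fin d) ℂ) (g : ℂ[X]) :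
    (aeval A g).det = (A.charpoly.roots.map (fun x => g.eval x)).prod := by
  have hc : A.charpoly = (A.charpoly.roots.map (fun x => X - C x)).prod :=
    (IsAlgClosed.splits A.charpoly).eq_prod_roots_of_monic A.charpoly_monic
  have hcard : Multiset.card A.charpoly.roots = d := by
    rw [← (IsAlgClosed.splits A.charpoly).natDegree_eq_card_roots]
    simp
  have h1 : ∀ μ : ℂ, (aeval A (X - C μ)).det = (A.charpoly.roots.map (fun x => (X - C μ).eval x)).prod := by
    intro μ
    have : (aeval A (X - C μ)) = - (Matrix.scalar (Fin d) μ - A) := by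
      simp [Matrix.algebraMap_eq_diagonal]
    rw [this, Matrix.det_neg, ← Matrix.eval_charpoly]
    conv_lhs => rw [hc]
    rw [eval_multiset_prod, Multiset.map_map]
    have : (-1 : ℂ) ^ Fintype.card (Fin d) = (A.charpoly.roots.map (fun _ => (-1 : ℂ))).prod := by
      simp [hcard]
    rw [this, ← Multiset.prod_map_mul]
    simp
  have hg := (IsAlgClosed.splits g).eq_prod_roots
  have h2 : ∀ s : Multiset ℂ, (aeval A (s.map (fun x => X - C x)).prod).det =
      (A.charpoly.roots.map (fun x => ((s.map (fun x => X - C x)).prod).eval x)).prod := by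
    intro s
    induction s using Multiset.induction with
    | empty => simp
    | cons a s ih =>
      rw [Multiset.map_cons, Multiset.prod_cons, map_mul, Matrix.det_mul, ih, h1, ← Multiset.prod_map_mul]
      simp only [eval_mul]
  rw [hg, map_mul, Matrix.det_mul, h2]
  simp only [eval_mul, Multiset.prod_map_mul]
  congr 1
  simp [Matrix.algebraMap_eq_diagonal, hcard]

lemma aux_trace {d : ℕ} (A : Matrix (Fin d) (Fin d) ℂ) (g : ℂ[X]) :
    (aeval A g).trace = (A.charpoly.roots.map (fun x => g.eval x)).sum := by
  have : (aeval A g).charpoly = ((A.charpoly.roots.map (fun x => g.eval x)).map (fun x => X - C x)).prod := by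
    apply Polynomial.funext
    intro t
    have := aux_det A (C t - g)
    rw [Matrix.eval_charpoly, eval_multiset_prod, Multiset.map_map, Multiset.map_map]
    simp only [map_sub, eval_sub, aeval_C, eval_C] at this
    simpa [Matrix.algebraMap_eq_diagonal, Pi.algebraMap_def] using this
  rw [Matrix.trace_eq_sum_roots_charpoly, this, Polynomial.roots_multiset_prod_X_sub_C]

lemma aux_span {R : Type*} [Ring R] (x : R) (N : Submodule ℤ R) (hN : N.FG)
    (h : ∀ n : ℕ, x ^ n ∈ N) : IsIntegral ℤ x := by
  refine IsIntegral.of_mem_of_fg (Algebra.adjoin ℤ {x}) ?_ x (Algebra.subset_adjoin rfl)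
  have : IsNoetherian ℤ N := isNoetherian_of_fg_of_noetherian N hN
  refine Submodule.FG.of_le hN ?_
  rw [Algebra.adjoin_eq_span, Submodule.span_le]
  intro y hy
  obtain ⟨n, rfl⟩ := Submonoid.mem_closure_singleton.1 hy
  exact h n

lemma aux_63 {d : ℕ} (A : Matrix (Fin d) (Fin d) ℚ) 
   (h : ∀ k : ℕ, ∃ z : ℤ, (A ^ k).trace = (z : ℚ)) (x : ℂ)
   (hx : Polynomial.aeval x A.charpoly = 0) : IsIntegral ℤ x := by
  classical
  let A' : Matrix (Fin d) (Fin d) ℂ := A.map (algebraMap ℚ ℂ)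
  have hA' : A'.charpoly = A.charpoly.map (algebraMap ℚ ℂ) := Matrix.charpoly_map A _
  have hxr : x ∈ A'.charpoly.roots := by
    rw [mem_roots (Matrix.charpoly_monic _).ne_zero, hA', IsRoot, eval_map_algebraMap, hx]
  have htr : ∀ k, ∃ z : ℤ, (A' ^ k).trace = z := by
    intro k
    obtain ⟨z, hz⟩ := h k
    refine ⟨z, ?_⟩
    have : A' ^ k = (A ^ k).map (algebraMap ℚ ℂ) := 
      (map_pow (algebraMap ℚ ℂ).mapMatrix A k).symm
    rw [this, ← AddMonoidHom.map_trace, hz]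
    simp
  set s := A'.charpoly.roots with hs
  let g : ℂ[X] := Lagrange.interpolate s.toFinset id (fun y => if y = x then 1 else 0)
  have hg : ∀ y ∈ s, g.eval y = if y = x then 1 else 0 := by
    intro y hy
    exact Lagrange.eval_interpolate_at_node (v := id) _ (Function.injective_id.injOn) (Multiset.mem_toFinset.2 hy)
  have hm : (s.count x : ℂ) ≠ 0 := by
    simpa using hxr
  have key : ∀ n, (s.count x : ℂ) * x ^ n = ∑ k ∈ g.support, g.coeff k * (A' ^ (k + n)).trace := by
    intro n
    have h1 := aux_trace A' (g * X ^ n)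
    have h2 : (s.map (fun y => (g * X ^ n).eval y)).sum = (s.count x : ℂ) * x ^ n := by
      have : s.map (fun y => (g * X ^ n).eval y) = s.map (fun y => if y = x then x ^ n else 0) := by
        apply Multiset.map_congr rfl
        intro y hy
        rw [eval_mul, hg y hy]
        split_ifs with e <;> simp [e]
      rw [this]
      clear_value s
      clear this h1 hg hm hxr g hs
      induction s using Multiset.induction with
      | empty => simp
      | cons a s ih =>
        rw [Multiset.map_cons, Multiset.sum_cons, ih, Multiset.count_cons]
        by_cases e : a = x
        · simp [e]; ring
        · simp [e, Ne.symm e]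
    rw [← h2, ← h1, map_mul, aeval_eq_sum_range, Finset.sum_mul, Matrix.trace_sum]
    simp only [map_pow, aeval_X, smul_mul_assoc, ← pow_add, Matrix.trace_smul, smul_eq_mul]
    symm
    apply Finset.sum_subset g.supp_subset_range_natDegree_succ
    intro k _ hk
    simp [notMem_support_iff.1 hk]
  apply aux_span x (Submodule.span ℤ ((g.support.image (fun k => (s.count x : ℂ)⁻¹ * g.coeff k) : Finset ℂ) : Set ℂ)) ⟨_, rfl⟩
  intro n
  have : x ^ n = ∑ k ∈ g.support, (s.count x : ℂ)⁻¹ * g.coeff k * (A' ^ (k + n)).trace := by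
    simp only [mul_assoc]
    rw [← Finset.mul_sum, ← key]
    field_simp
  rw [this]
  refine Submodule.sum_mem _ fun k hk => ?_
  obtain ⟨z, hz⟩ := htr (k + n)
  rw [hz, mul_comm, ← zsmul_eq_mul]
  exact Submodule.smul_mem _ _ (Submodule.subset_span (Finset.mem_coe.2 (Finset.mem_image_of_mem _ hk)))

lemma aux_int {d : ℕ} (A : Matrix (Fin d) (Fin d) ℚ) (p : ℚ[X]) (hp : p.Monic)
    (hA : aeval A p = 0) (h : ∀ k : ℕ, ∃ z : ℤ, p.coeff k = (z : ℚ)) : IsIntegral ℤ A := by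
  have : p ∈ lifts (algebraMap ℤ ℚ) := by
    rw [lifts_iff_coeff_lifts]
    intro k
    obtain ⟨z, hz⟩ := h k
    exact ⟨z, by simp [hz]⟩
  obtain ⟨q, hq, -, hqm⟩ := lifts_and_natDegree_eq_and_monic this hp
  refine ⟨q, hqm, ?_⟩
  rw [← hq, aeval_map_algebraMap] at hA
  exact hA

lemma aux_int_minpoly {d : ℕ} (A : Matrix (Fin d) (Fin d) ℚ) (h : IsIntegral ℤ A) (k : ℕ) :
    ∃ z : ℤ, (minpoly ℚ A).coeff k = (z : ℚ) := by
  obtain ⟨f, hf, hfA⟩ := h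
  have h1 : aeval A (f.map (algebraMap ℤ ℚ)) = 0 := by
    rw [aeval_map_algebraMap]; exact hfA
  obtain ⟨q, hq⟩ := IsIntegrallyClosed.eq_map_mul_C_of_dvd ℚ hf (minpoly.dvd ℚ A h1)
  rw [(minpoly.monic (Matrix.isIntegral A)).leadingCoeff, C_1, mul_one] at hq
  exact ⟨q.coeff k, by rw [← hq]; simp⟩

lemma aux_int_root {d : ℕ} (A : Matrix (Fin d) (Fin d) ℚ) (h : IsIntegral ℤ A) (x : ℂ)
   (hx : Polynomial.aeval x A.charpoly = 0) : IsIntegral ℤ x := by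
  obtain ⟨f, hf, hfA⟩ := h
  let A' : Matrix (Fin d) (Fin d) ℂ := A.map (algebraMap ℚ ℂ)
  have hA' : A'.charpoly = A.charpoly.map (algebraMap ℚ ℂ) := Matrix.charpoly_map A _
  have hr : A'.charpoly.IsRoot x := by
    rw [hA', IsRoot, eval_map_algebraMap, hx]
  have hsp := Matrix.mem_spectrum_of_isRoot_charpoly hr
  have h0 : aeval A' (f.map (algebraMap ℤ ℂ)) = 0 := by
    rw [aeval_map_algebraMap]
    have : aeval ((algebraMap ℚ ℂ).mapMatrix.toIntAlgHom A) f = (algebraMap ℚ ℂ).mapMatrix.toIntAlgHom (aeval A f) := 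
      aeval_algHom_apply _ _ _
    have h2 : aeval A f = 0 := hfA
    rw [h2, map_zero] at this
    exact this
  have h1 := spectrum.subset_polynomial_aeval A' (f.map (algebraMap ℤ ℂ)) ⟨x, hsp, rfl⟩
  have : Nontrivial (Matrix (Fin d) (Fin d) ℂ) := by
    by_contra hn
    rw [not_nontrivial_iff_subsingleton] at hn
    simp [spectrum.of_subsingleton] at hsp
  rw [h0, spectrum.zero_eq] at h1
  refine ⟨f, hf, ?_⟩
  simpa [eval_map] using h1

lemma aux_31 {d : ℕ} (A : Matrix (Fin d) (Fin d) ℚ) 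
   (h : ∀ x : ℂ, Polynomial.aeval x A.charpoly = 0 → IsIntegral ℤ x) (k : ℕ) :
   ∃ z : ℤ, A.charpoly.coeff k = (z : ℚ) := by
  have h1 : ∀ k, IsIntegral ℤ ((A.charpoly.map (algebraMap ℚ ℂ)).coeff k) := by
    have hm := A.charpoly_monic.map (algebraMap ℚ ℂ)
    refine Polynomial.isIntegral_coeff_of_factors _ (by rw [hm.leadingCoeff]; exact isIntegral_one)
      (IsAlgClosed.splits _) fun x hx => h x ?_
    rwa [IsRoot, eval_map_algebraMap] at hx
  have h2 := h1 k
  rw [coeff_map, isIntegral_algebraMap_iff (algebraMap ℚ ℂ).injective] at h2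
  obtain ⟨z, hz⟩ := IsIntegrallyClosed.isIntegral_iff.1 h2
  exact ⟨z, by simpa using hz.symm⟩

lemma aux_14 {d : ℕ} (A : Matrix (Fin d) (Fin d) ℚ) (h : IsIntegral ℤ A) :
    ∃ m : ℕ, 1 ≤ m ∧ ∀ n : ℕ, ∀ i j, ∃ z : ℤ, (m : ℚ) * (A ^ n) i j = (z : ℚ) := by
  classical
  obtain ⟨s, hs⟩ := h.fg_adjoin_singleton
  obtain ⟨b, hb⟩ := IsLocalization.exist_integer_multiples_of_finite (nonZeroDivisors ℤ)
    (fun t : s × Fin d × Fin d => (t.1 : Matrix (Fin d) (Fin d) ℚ) t.2.1 t.2.2)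
  have hb0 : (b : ℤ) ≠ 0 := nonZeroDivisors.coe_ne_zero b
  have key : ∀ M ∈ Submodule.span ℤ (s : Set (Matrix (Fin d) (Fin d) ℚ)), ∀ i j, ∃ z : ℤ, (b : ℤ) * M i j = (z : ℚ) := by
    intro M hM i j
    induction hM using Submodule.span_induction with
    | mem M hM =>
      obtain ⟨z, hz⟩ := hb (⟨M, hM⟩, i, j)
      exact ⟨z, by simpa [Algebra.smul_def] using hz.symm⟩
    | zero => exact ⟨0, by simp⟩
    | add M N _ _ hM hN =>
      obtain ⟨z, hz⟩ := hM
      obtain ⟨w, hw⟩ := hN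
      exact ⟨z + w, by simp [mul_add, hz, hw]⟩
    | smul a M _ hM =>
      obtain ⟨z, hz⟩ := hM
      refine ⟨a * z, ?_⟩
      rw [Matrix.smul_apply, zsmul_eq_mul, Int.cast_mul, ← hz]; ring
  refine ⟨(b : ℤ).natAbs, Int.natAbs_pos.2 hb0, fun n i j => ?_⟩
  have hmem : A ^ n ∈ Subalgebra.toSubmodule (Algebra.adjoin ℤ {A}) :=
    Subalgebra.pow_mem _ (Algebra.self_mem_adjoin_singleton ℤ A) n
  rw [← hs] at hmem
  obtain ⟨z, hz⟩ := key (A ^ n) hmem i j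
  rcases Int.natAbs_eq (b : ℤ) with e | e
  · exact ⟨z, by rw [← hz]; congr 1; rw [e]; simp⟩
  · refine ⟨-z, ?_⟩
    rw [e] at hz
    push_cast at hz ⊢
    rw [← hz]; simp

lemma aux_45 {d : ℕ} (A : Matrix (Fin d) (Fin d) ℚ)
    (h : ∃ m : ℕ, 1 ≤ m ∧ ∀ n : ℕ, ∀ i j, ∃ z : ℤ, (m : ℚ) * (A ^ n) i j = (z : ℚ)) :
    ∃ B P : Matrix (Fin d) (Fin d) ℤ, (P.map (Int.cast : ℤ → ℚ)).det ≠ 0 ∧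
          A = P.map (Int.cast : ℤ → ℚ) * B.map (Int.cast : ℤ → ℚ) *
            (P.map (Int.cast : ℤ → ℚ))⁻¹ := by
  obtain ⟨m, hm, h⟩ := h
  let ι : (Fin d → ℤ) →ₗ[ℤ] (Fin d → ℚ) := (Int.castAddHom ℚ).toIntLinearMap.compLeft (Fin d)
  have hι : ∀ v i, ι v i = (v i : ℚ) := fun v i => rfl
  let L : Submodule ℤ (Fin d → ℤ) :=
    { carrier := {v | ∀ n : ℕ, ∃ w, (A ^ n).mulVec (ι v) = ι w}
      zero_mem' := fun n => ⟨0, by simp⟩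
      add_mem' := by
        intro a b ha hb n
        obtain ⟨w, hw⟩ := ha n
        obtain ⟨u, hu⟩ := hb n
        exact ⟨w + u, by rw [map_add, map_add, Matrix.mulVec_add, hw, hu]⟩
      smul_mem' := by
        intro c a ha n
        obtain ⟨w, hw⟩ := ha n
        exact ⟨c • w, by rw [map_smul, map_smul, Matrix.mulVec_smul, hw]⟩ }
  have hL : ∀ i, (Pi.single i (m : ℤ) : Fin d → ℤ) ∈ L := by
    intro i n
    choose z hz using fun k => h n k i
    refine ⟨z, ?_⟩
    have : ι (Pi.single i (m : ℤ)) = Pi.single i (m : ℚ) := by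
      ext k; rw [hι]; by_cases e : k = i
      · subst e; simp
      · simp [e]
    rw [this]
    ext k
    rw [hι, ← hz, Matrix.mulVec_single]
    simp [mul_comm]
  have hfr : Module.finrank ℤ L = d := by
    apply le_antisymm
    · simpa using Submodule.finrank_le L
    · have hli : LinearIndependent ℤ (fun i : Fin d => (⟨Pi.single i (m : ℤ), hL i⟩ : L)) := by
        apply LinearIndependent.of_comp L.subtype
        rw [Fintype.linearIndependent_iff]
        intro g hg i
        have := congrFun hg i
        simp [Finset.sum_apply, Pi.single_apply] at this
        omega
      simpa using hli.fintype_card_le_finrank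
  let b := Module.finBasisOfFinrankEq ℤ L hfr
  let P : Matrix (Fin d) (Fin d) ℤ := Matrix.of fun i j => (b j : Fin d → ℤ) i
  have hP : ∀ v ∈ L, ∃ c : Fin d → ℤ, P.mulVec c = v := by
    intro v hv
    refine ⟨b.repr ⟨v, hv⟩, ?_⟩
    have := congrArg (Subtype.val) (b.sum_repr ⟨v, hv⟩)
    ext i
    have := congrFun this i
    simp only [AddSubmonoidClass.coe_finsetSum, Finset.sum_apply] at this
    rw [← this]
    simp [Matrix.mulVec, dotProduct, P, mul_comm]
  have hdet : P.det ≠ 0 := by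
    choose c hc using fun i => hP _ (hL i)
    have : P * (Matrix.of fun i j => c j i) = (m : ℤ) • 1 := by
      ext i j
      have := congrFun (hc j) i
      simp only [Matrix.mulVec, dotProduct] at this
      rw [Matrix.mul_apply]
      simp only [Matrix.of_apply, this]
      simp [Matrix.one_apply, Pi.single_apply]
    intro h0
    have := congrArg Matrix.det this
    rw [Matrix.det_mul, h0, zero_mul, Matrix.det_smul, Matrix.det_one, mul_one] at this
    have hm0 : (m : ℤ) ≠ 0 := by omega
    exact pow_ne_zero _ hm0 this.symm
  have hA : ∀ j, ∃ w ∈ L, A.mulVec (ι (b j)) = ι w := by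
    intro j
    obtain ⟨w, hw⟩ := (b j).2 1
    rw [pow_one] at hw
    refine ⟨w, ?_, hw⟩
    intro n
    obtain ⟨u, hu⟩ := (b j).2 (n + 1)
    exact ⟨u, by rw [← hu, ← hw, Matrix.mulVec_mulVec, pow_succ]⟩
  choose w hw hAw using hA
  choose c hc using fun j => hP (w j) (hw j)
  have hdetQ : (P.map (Int.cast : ℤ → ℚ)).det ≠ 0 := by
    have : (P.map (Int.cast : ℤ → ℚ)).det = (P.det : ℚ) := ((Int.castRingHom ℚ).map_det P).symm
    rw [this]; exact_mod_cast hdet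
  refine ⟨Matrix.of fun i j => c j i, P, hdetQ, ?_⟩
  have hAP : A * P.map (Int.cast : ℤ → ℚ) = P.map (Int.cast : ℤ → ℚ) * (Matrix.of fun i j => c j i).map (Int.cast : ℤ → ℚ) := by
    ext i j
    have h1 := congrFun (hAw j) i
    rw [hι, ← hc] at h1
    simp only [Matrix.mulVec, dotProduct] at h1
    push_cast at h1
    rw [Matrix.mul_apply, Matrix.mul_apply]
    exact h1
  rw [← hAP, Matrix.mul_assoc, Matrix.mul_nonsing_inv _ (isUnit_iff_ne_zero.2 hdetQ), Matrix.mul_one]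

lemma aux_56 {d : ℕ} (A : Matrix (Fin d) (Fin d) ℚ)
    (h : ∃ B P : Matrix (Fin d) (Fin d) ℤ, (P.map (Int.cast : ℤ → ℚ)).det ≠ 0 ∧
          A = P.map (Int.cast : ℤ → ℚ) * B.map (Int.cast : ℤ → ℚ) *
            (P.map (Int.cast : ℤ → ℚ))⁻¹) (k : ℕ) : ∃ z : ℤ, (A ^ k).trace = (z : ℚ) := by
  obtain ⟨B, P, hP, rfl⟩ := h
  set Q := P.map (Int.cast : ℤ → ℚ)
  have hQ : Q⁻¹ * Q = 1 := Matrix.nonsing_inv_mul _ (isUnit_iff_ne_zero.2 hP)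
  have hQ' : Q * Q⁻¹ = 1 := Matrix.mul_nonsing_inv _ (isUnit_iff_ne_zero.2 hP)
  have : ∀ C : Matrix (Fin d) (Fin d) ℚ, (Q * C * Q⁻¹) ^ k = Q * C ^ k * Q⁻¹ := by
    intro C
    induction k with
    | zero => simp [hQ']
    | succ k ih =>
      rw [pow_succ, ih, pow_succ]
      simp only [Matrix.mul_assoc]
      rw [← Matrix.mul_assoc Q⁻¹ Q, hQ, Matrix.one_mul]
  rw [this, Matrix.trace_mul_comm, ← Matrix.mul_assoc, hQ, Matrix.one_mul]
  refine ⟨(B ^ k).trace, ?_⟩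
  have : (B.map (Int.cast : ℤ → ℚ)) ^ k = (B ^ k).map (Int.cast : ℤ → ℚ) := 
    (map_pow (Int.castRingHom ℚ).mapMatrix B k).symm
  rw [this]
  simp [Matrix.trace]


theorem stmt_11 {d : ℕ} (A : Matrix (Fin d) (Fin d) ℚ) :
    List.TFAE
      [ (∀ k : ℕ, ∃ z : ℤ, A.charpoly.coeff k = (z : ℚ)),
        (∀ k : ℕ, ∃ z : ℤ, (minpoly ℚ A).coeff k = (z : ℚ)),
        (∀ x : ℂ, Polynomial.aeval x A.charpoly = 0 → IsIntegral ℤ x),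
        (∃ m : ℕ, 1 ≤ m ∧ ∀ n : ℕ, ∀ i j, ∃ z : ℤ, (m : ℚ) * (A ^ n) i j = (z : ℚ)),
        (∃ B P : Matrix (Fin d) (Fin d) ℤ, (P.map (Int.cast : ℤ → ℚ)).det ≠ 0 ∧
          A = P.map (Int.cast : ℤ → ℚ) * B.map (Int.cast : ℤ → ℚ) *
            (P.map (Int.cast : ℤ → ℚ))⁻¹),
        (∀ k : ℕ, ∃ z : ℤ, (A ^ k).trace = (z : ℚ)) ] := by
  tfae_have 1 → 2 := fun h => aux_int_minpoly A (aux_int A _ A.charpoly_monic A.aeval_self_charpoly h)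
  tfae_have 2 → 3 := fun h => aux_int_root A (aux_int A _ (minpoly.monic A.isIntegral) (minpoly.aeval ℚ A) h)
  tfae_have 3 → 1 := aux_31 A
  tfae_have 1 → 4 := fun h => aux_14 A (aux_int A _ A.charpoly_monic A.aeval_self_charpoly h)
  tfae_have 4 → 5 := aux_45 A
  tfae_have 5 → 6 := aux_56 A
  tfae_have 6 → 3 := aux_63 A
  tfae_finish
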